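/- Having a Borel selector is upward-closed in the Katětov order: if I and J are tall Borel ideals on ℕ, I contains all finite subsets of ℕ, I ≤_K J, and I has a Borel selector, then J has a Borel selector. -/

import Mathlib

/-- `x` is a subset of `y`, for subsets of `α` coded as characteristic functions. -/
def subB {α : Type} (x y : α → Bool) : Prop := ∀ a, x a = true → y a = true

/-- Union of two subsets of `α` coded as characteristic functions. -/
def unionB {α : Type} (x y : α → Bool) : α → Bool := fun a => x a || y a

/-- The set coded by a characteristic function. -/
def suppB {α : Type} (x : α → Bool) : Set α := {a | x a = true}

/-- The coded set is infinite. -/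
def InfiniteB {α : Type} (x : α → Bool) : Prop := (suppB x).Infinite

/-- `I` is an ideal: closed under subsets and (finite) unions. -/
def IsIdealB {α : Type} (I : Set (α → Bool)) : Prop :=
  (∀ x ∈ I, ∀ y, subB y x → y ∈ I) ∧ ∀ x ∈ I, ∀ y ∈ I, unionB x y ∈ I

/-- `I` is tall: every infinite set has an infinite subset in `I`. -/
def IsTallB {α : Type} (I : Set (α → Bool)) : Prop :=
  ∀ x, InfiniteB x → ∃ y ∈ I, InfiniteB y ∧ subB y x

/-- `I` contains all finite sets. -/
def ContainsFinB {α : Type} (I : Set (α → Bool)) : Prop :=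
  ∀ x : α → Bool, (suppB x).Finite → x ∈ I

/-- `I` is an `F_σ` subset of the Cantor space `α → Bool`. -/
def IsFsigmaB {α : Type} (I : Set (α → Bool)) : Prop :=
  ∃ F : ℕ → Set (α → Bool), (∀ n, IsClosed (F n)) ∧ I = ⋃ n, F n

/-- Katětov order: `I ≤_K J` via some `f` with `f⁻¹[A] ∈ J` for all `A ∈ I`. -/
def KatLE {α β : Type} (I : Set (α → Bool)) (J : Set (β → Bool)) : Prop :=
  ∃ f : β → α, ∀ x ∈ I, (fun b => x (f b)) ∈ J

/-!
Let `f` witness `I ≤_K J` and let `S` be a selector for `I`. Given an infinite `x`, look at the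
image `f[x]`. If it is infinite, then `f⁻¹[S(f[x])] ∈ J`, and its trace on `x` is infinite because
`f` maps it onto `S(f[x])`. If it is finite, then it belongs to `I`, so `x ⊆ f⁻¹[f[x]]` is itself
in `J`. The case distinction is Borel because only countably many subsets of a countable set are
finite.
-/

section

variable {α β : Type}

/-- `S` is a selector for `I`: it picks an infinite subset in `I` of each infinite set. Its values
on finite sets are unconstrained. -/
def IsSelectorB (I : Set (α → Bool)) (S : (α → Bool) → (α → Bool)) : Prop :=
  ∀ x, InfiniteB x → S x ∈ I ∧ InfiniteB (S x) ∧ subB (S x) x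

open Classical in
/-- The image `f[x]` of a coded set `x` under `f`. -/
noncomputable def imageB (f : β → α) (x : β → Bool) : α → Bool :=
  fun a => decide (∃ b, x b = true ∧ f b = a)

open Classical in
/-- The selector obtained by transporting a selector `S` along a Katětov reduction `f`: it maps `x`
to `x ∩ f⁻¹[S(f[x])]` if `f[x]` is infinite, and to `x` otherwise. -/
noncomputable def katetovSelector (f : β → α) (S : (α → Bool) → (α → Bool)) (x : β → Bool) :
    β → Bool :=
  if InfiniteB (imageB f x) then x ⊓ S (imageB f x) ∘ f else x

theorem suppB_injective : Function.Injective (suppB : (α → Bool) → Set α) := fun _ _ h =>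
  funext fun a => Bool.eq_iff_iff.mpr (Set.ext_iff.mp h a)

theorem suppB_inf (x y : α → Bool) : suppB (x ⊓ y) = suppB x ∩ suppB y :=
  Set.ext fun _ => Bool.and_eq_true_iff

theorem suppB_imageB (f : β → α) (x : β → Bool) : suppB (imageB f x) = f '' suppB x :=
  Set.ext fun _ => by simp [suppB, imageB]

theorem subB_imageB_comp (f : β → α) (x : β → Bool) : subB x (imageB f x ∘ f) :=
  fun b hb => by simpa [imageB] using ⟨b, hb, rfl⟩

theorem measurableSet_infiniteB [Countable α] :
    MeasurableSet {x : α → Bool | InfiniteB x} := by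
  have finite_countable : {x : α → Bool | (suppB x).Finite}.Countable :=
    Set.Countable.ofPred_finite.preimage suppB_injective
  exact finite_countable.measurableSet.compl

theorem measurable_imageB [Countable β] (f : β → α) : Measurable (imageB f) := by
  refine measurable_pi_lambda _ fun a => measurable_to_bool ?_
  have preimage_eq : (fun x => imageB f x a) ⁻¹' {true} =
      ⋃ b ∈ f ⁻¹' {a}, {x : β → Bool | x b = true} := by
    ext x
    simp [imageB, and_comm]
  rw [preimage_eq]
  exact .biUnion (Set.to_countable _) fun b _ =>
    measurableSet_eq_fun (measurable_pi_apply b) measurable_const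

theorem measurable_katetovSelector [Countable α] [Countable β] (f : β → α)
    {S : (α → Bool) → (α → Bool)} (hS : Measurable S) : Measurable (katetovSelector f S) := by
  refine .ite (measurable_imageB f measurableSet_infiniteB) ?_ measurable_id
  refine measurable_pi_lambda _ fun b => ?_
  have measurable_selected : Measurable fun x => S (imageB f x) (f b) :=
    (measurable_pi_apply (f b)).comp (hS.comp (measurable_imageB f))
  exact (measurable_of_countable fun p : Bool × Bool => p.1 ⊓ p.2).comp
    ((measurable_pi_apply b).prodMk measurable_selected)

theorem InfiniteB.inf_comp {f : β → α} {x : β → Bool} {y : α → Bool} (hy : InfiniteB y)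
    (hyx : subB y (imageB f x)) : InfiniteB (x ⊓ y ∘ f) := by
  have image_eq : f '' suppB (x ⊓ y ∘ f) = suppB y := calc
    f '' suppB (x ⊓ y ∘ f) = f '' (suppB x ∩ f ⁻¹' suppB y) := congrArg _ (suppB_inf x (y ∘ f))
    _ = suppB (imageB f x) ∩ suppB y := by rw [Set.image_inter_preimage, suppB_imageB]
    _ = suppB y := Set.inter_eq_right.mpr hyx
  exact Set.Infinite.of_image f (image_eq ▸ hy)

theorem isSelectorB_katetovSelector {I : Set (α → Bool)} {J : Set (β → Bool)}
    {S : (α → Bool) → (α → Bool)} {f : β → α} (hS : IsSelectorB I S)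
    (hJ : ∀ x ∈ J, ∀ y, subB y x → y ∈ J) (hI : ContainsFinB I) (hf : ∀ x ∈ I, x ∘ f ∈ J) :
    IsSelectorB J (katetovSelector f S) := by
  intro x hx
  by_cases himage : InfiniteB (imageB f x)
  · obtain ⟨hmem, hinf, hsub⟩ := hS _ himage
    rw [katetovSelector, if_pos himage]
    have supp_eq := suppB_inf x (S (imageB f x) ∘ f)
    exact ⟨hJ _ (hf _ hmem) _ (supp_eq.trans_subset Set.inter_subset_right),
      hinf.inf_comp hsub, supp_eq.trans_subset Set.inter_subset_left⟩
  · have hmem : imageB f x ∈ I := hI _ (Set.not_infinite.mp himage)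
    rw [katetovSelector, if_neg himage]
    exact ⟨hJ _ (hf _ hmem) _ (subB_imageB_comp f x), hx, fun _ => id⟩

theorem borel_selector_upward_closed_general [Countable α] [Countable β]
    {I : Set (α → Bool)} {J : Set (β → Bool)} (hJ : ∀ x ∈ J, ∀ y, subB y x → y ∈ J)
    (hI : ContainsFinB I) (hK : KatLE I J) {S : (α → Bool) → (α → Bool)} (hS : Measurable S)
    (hsel : IsSelectorB I S) :
    ∃ T : (β → Bool) → (β → Bool), Measurable T ∧ IsSelectorB J T := by
  obtain ⟨f, hf⟩ := hK
  exact ⟨katetovSelector f S, measurable_katetovSelector f hS,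
    isSelectorB_katetovSelector hsel hJ hI hf⟩

end

/-- Having a Borel selector is upward closed in the Katětov order: if `I ≤_K J` are tall Borel
ideals on `ℕ`, `I` contains all finite sets, and `I` has a Borel selector, then so does `J`. -/
theorem borel_selector_upward_closed (I J : Set (ℕ → Bool))
    (hI : IsIdealB I) (hJ : IsIdealB J) (hItall : IsTallB I) (hJtall : IsTallB J)
    (hIB : MeasurableSet I) (hJB : MeasurableSet J) (hIfin : ContainsFinB I)
    (hK : KatLE I J)
    (S : (ℕ → Bool) → (ℕ → Bool)) (hS : Measurable S)
    (hsel : ∀ x : ℕ → Bool, InfiniteB x → S x ∈ I ∧ InfiniteB (S x) ∧ subB (S x) x) :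
    ∃ T : (ℕ → Bool) → (ℕ → Bool), Measurable T ∧
      ∀ x : ℕ → Bool, InfiniteB x → T x ∈ J ∧ InfiniteB (T x) ∧ subB (T x) x :=
  borel_selector_upward_closed_general hJ.1 hIfin hK hS hsel
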